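/- (Pieri rule for hives.) Let n ≥ 1, let 0 ≤ i ≤ n, and let λ, ν ∈ ℤⁿ be weakly decreasing. Then the set HIVE_{λ, ω_i^n}^ν has exactly one element if ν − λ ∈ {0,1}ⁿ and Σ_{k=1}^n (ν_k − λ_k) = i, and is empty otherwise. -/

import Mathlib

/-!
The edges of a hive parallel to the Northeast side carry the differences
`D x z = h x y (z+1) - h x (y+1) z`. The first and third rhombus inequalities of `IsHive` say
exactly that the rows `D x ·` (of length `n - x`) interlace: `D x z ≥ D (x+1) z ≥ D x (z+1)`, so they form a
Gelfand–Tsetlin pattern with top row `ω_i^n`. Hence every row is again a fundamental weight, say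
with `a` ones, and passing to the next row lowers `a` by `0` or `1` (`IsHive.rowShape_step`).

Summing along a row of length `m` gives `a = ∑_{k ≤ m} (ν_k - λ_k)`. This forces
`ν - λ ∈ {0,1}ⁿ` with sum `i`, and it determines the hive: on the row with `y + z = m`,
`h x y z = (λ_1 + ⋯ + λ_m) + min z a` (`HiveSet.eq_formula`). Conversely this formula defines a
hive (`pieriHive_mem`); there the second rhombus inequality is where the hypothesis that `λ` and `ν` are weakly
decreasing enters.
-/

/-- A hive of size `n`: an integer labeling of `tri_n = {(x,y,z) : x+y+z = n}`
(encoded as a function on all of `ℕ³`; only values on `tri_n` are constrained)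
satisfying the three families of rhombus inequalities. -/
def IsHive (n : ℕ) (h : ℕ → ℕ → ℕ → ℤ) : Prop :=
  ∀ x y z : ℕ, x + y + z + 2 = n →
    h (x+1) y (z+1) + h x (y+1) (z+1) ≥ h (x+1) (y+1) z + h x y (z+2) ∧
    h (x+1) (y+1) z + h (x+1) y (z+1) ≥ h x (y+1) (z+1) + h (x+2) y z ∧
    h x (y+1) (z+1) + h (x+1) (y+1) z ≥ h (x+1) y (z+1) + h x (y+2) z

/-- Normalization pinning down the (irrelevant) values outside `tri_n`, so that a
hive is faithfully a function on `tri_n`. -/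
def OnTri (n : ℕ) (h : ℕ → ℕ → ℕ → ℤ) : Prop :=
  ∀ x y z : ℕ, x + y + z ≠ n → h x y z = 0

/-- `l` is the vector of differences of `h` along the Northwest side,
read left-to-right: `l_k = h(n-k,k,0) - h(n-k+1,k-1,0)` for `k = 1, …, n`
(here `k = j.1 + 1` for `j : Fin n`). -/
def HasNWDiff (n : ℕ) (h : ℕ → ℕ → ℕ → ℤ) (l : Fin n → ℤ) : Prop :=
  ∀ j : Fin n, l j = h (n - (j.1+1)) (j.1+1) 0 - h (n - j.1) j.1 0

/-- `l` is the vector of differences of `h` along the Northeast side: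
`l_k = h(0,n-k,k) - h(0,n-k+1,k-1)` for `k = 1, …, n`. -/
def HasNEDiff (n : ℕ) (h : ℕ → ℕ → ℕ → ℤ) (l : Fin n → ℤ) : Prop :=
  ∀ j : Fin n, l j = h 0 (n - (j.1+1)) (j.1+1) - h 0 (n - j.1) j.1

/-- `l` is the vector of differences of `h` along the South side:
`l_k = h(n-k,0,k) - h(n-k+1,0,k-1)` for `k = 1, …, n`. -/
def HasSDiff (n : ℕ) (h : ℕ → ℕ → ℕ → ℤ) (l : Fin n → ℤ) : Prop :=
  ∀ j : Fin n, l j = h (n - (j.1+1)) 0 (j.1+1) - h (n - j.1) 0 j.1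

/-- `HIVE_{λμ}^ν`: the set of hives of size `n` with value `0` at `(n,0,0)`,
Northwest-side differences `λ`, Northeast-side differences `μ`, and South-side
differences `ν`. -/
def HiveSet (n : ℕ) (lam mu nu : Fin n → ℤ) : Set (ℕ → ℕ → ℕ → ℤ) :=
  {h | OnTri n h ∧ IsHive n h ∧ h n 0 0 = 0 ∧
    HasNWDiff n h lam ∧ HasNEDiff n h mu ∧ HasSDiff n h nu}

/-- The fundamental weight `ω_i^m = (1,…,1,0,…,0)` with `i` ones and `m - i`
zeros: the `k`-th entry (`k = j.1 + 1`) is `1` iff `k ≤ i`. -/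
def omegaVec (m i : ℕ) : Fin m → ℤ := fun j => if j.1 < i then 1 else 0

/-! ### Partial sums -/

/-- The partial sum of the first `m` entries of `v`, with entries beyond the `n`-th read as `0`. -/
def partialSum {n : ℕ} (v : Fin n → ℤ) (m : ℕ) : ℤ :=
  ∑ j ∈ Finset.range m, if hj : j < n then v ⟨j, hj⟩ else 0

@[simp] lemma partialSum_zero {n : ℕ} (v : Fin n → ℤ) : partialSum v 0 = 0 := by
  simp [partialSum]

lemma partialSum_succ {n : ℕ} (v : Fin n → ℤ) (m : ℕ) (hm : m < n) :
    partialSum v (m + 1) = partialSum v m + v ⟨m, hm⟩ := by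
  simp [partialSum, Finset.sum_range_succ, hm]

lemma partialSum_self {n : ℕ} (v : Fin n → ℤ) : partialSum v n = ∑ j, v j := by
  rw [partialSum, Finset.sum_range]
  simp

/-! ### Rows of a hive as fundamental weights -/

/-- The row of `h` at first coordinate `x`, consisting of the points with `y + z = m`, has
successive differences `1, …, 1, 0, …, 0` with exactly `a` ones. -/
def RowShape (h : ℕ → ℕ → ℕ → ℤ) (x m a : ℕ) : Prop :=
  a ≤ m ∧ ∀ y z : ℕ, y + z = m → h x y z = h x m 0 + min (z : ℤ) a

/-- If a row of a hive has differences `ω_a`, then interlacing makes the next row have differences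
`ω_{a'}` with `a' ∈ {a - 1, a}`. -/
lemma IsHive.rowShape_step {n : ℕ} {h : ℕ → ℕ → ℕ → ℤ} (hh : IsHive n h) {x m a : ℕ}
    (hxm : x + (m + 1) = n) (ha : RowShape h x (m + 1) a) :
    ∃ a', RowShape h (x + 1) m a' ∧ a' ≤ a ∧ a ≤ a' + 1 := by
  obtain ⟨ham, hrow⟩ := ha
  -- interlacing, with the differences of the known row evaluated
  have key : ∀ y z : ℕ, y + z + 1 = m →
      (if z + 1 < a then 1 else 0) ≤ h (x+1) y (z+1) - h (x+1) (y+1) z ∧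
      h (x+1) y (z+1) - h (x+1) (y+1) z ≤ (if z < a then 1 else 0) := by
    intro y z hyz
    obtain ⟨h1, -, h3⟩ := hh x y z (by omega)
    have e1 := hrow (y + 1) (z + 1) (by omega)
    have e2 := hrow y (z + 2) (by omega)
    have e3 := hrow (y + 2) z (by omega)
    push_cast at e1 e2
    constructor <;> split_ifs <;> omega
  -- the only undetermined difference is the one at index `a - 1`
  obtain ⟨a', ham', h1, h2, hlast⟩ : ∃ a' : ℕ, a' ≤ m ∧ a' ≤ a ∧ a ≤ a' + 1 ∧
      ∀ y z : ℕ, y + z + 1 = m → z + 1 = a →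
        h (x+1) y (z+1) - h (x+1) (y+1) z = if z < a' then 1 else 0 := by
    by_cases hc : ∃ y z : ℕ, y + z + 1 = m ∧ z + 1 = a ∧
        h (x+1) y (z+1) - h (x+1) (y+1) z = 1
    · obtain ⟨y, z, hyz, hz, hD⟩ := hc
      refine ⟨a, by omega, le_rfl, by omega, fun y' z' hyz' hz' => ?_⟩
      obtain rfl : z' = z := by omega
      obtain rfl : y' = y := by omega
      rw [hD, if_pos (by omega)]
    · refine ⟨a - 1, by omega, by omega, by omega, fun y z hyz hz => ?_⟩
      have hne : h (x+1) y (z+1) - h (x+1) (y+1) z ≠ 1 := fun hD => hc ⟨y, z, hyz, hz, hD⟩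
      have hk := key y z hyz
      rw [if_neg (by omega), if_pos (by omega)] at hk
      rw [if_neg (by omega)]
      omega
  refine ⟨a', ⟨ham', fun y z => ?_⟩, h1, h2⟩
  induction z generalizing y with
  | zero =>
    intro hy
    obtain rfl : y = m := by omega
    simp
  | succ z ih =>
    intro hyz
    have hprev := ih (y + 1) (by omega)
    have hk := key y z (by omega)
    have hl := hlast y z (by omega)
    push_cast
    by_cases hz : z + 1 = a
    · have hl := hl hz
      split_ifs at hl <;> omega
    · split_ifs at hk <;> omega

lemma rowShape_zero {n i : ℕ} (hi : i ≤ n) {h : ℕ → ℕ → ℕ → ℤ}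
    (hNE : HasNEDiff n h (omegaVec n i)) : RowShape h 0 n i := by
  refine ⟨hi, fun y z => ?_⟩
  induction z generalizing y with
  | zero =>
    intro hy
    obtain rfl : y = n := by omega
    simp
  | succ z ih =>
    intro hyz
    have hprev := ih (y + 1) (by omega)
    have hd := hNE ⟨z, by omega⟩
    simp only [omegaVec] at hd
    rw [show n - (z + 1) = y by omega, show n - z = y + 1 by omega] at hd
    push_cast
    split_ifs at hd <;> omega

lemma IsHive.exists_rowShape {n i : ℕ} (hi : i ≤ n) {h : ℕ → ℕ → ℕ → ℤ} (hh : IsHive n h)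
    (hNE : HasNEDiff n h (omegaVec n i)) (x m : ℕ) (hxm : x + m = n) :
    ∃ a, RowShape h x m a := by
  induction x generalizing m with
  | zero =>
    obtain rfl : m = n := by omega
    exact ⟨i, rowShape_zero hi hNE⟩
  | succ x ih =>
    obtain ⟨a, ha⟩ := ih (m + 1) (by omega)
    obtain ⟨a', ha', -⟩ := hh.rowShape_step (by omega) ha
    exact ⟨a', ha'⟩

/-! ### Boundary data determine the hive -/

lemma HasNWDiff.eq_partialSum {n : ℕ} {h : ℕ → ℕ → ℕ → ℤ} {lam : Fin n → ℤ}
    (hNW : HasNWDiff n h lam) (h0 : h n 0 0 = 0) (x m : ℕ) (hxm : x + m = n) :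
    h x m 0 = partialSum lam m := by
  induction m generalizing x with
  | zero =>
    obtain rfl : x = n := by omega
    simpa using h0
  | succ m ih =>
    have hprev := ih (x + 1) (by omega)
    have hd := hNW ⟨m, by omega⟩
    dsimp only at hd
    rw [show n - (m + 1) = x by omega, show n - m = x + 1 by omega] at hd
    rw [partialSum_succ lam m (by omega)]
    omega

lemma HasSDiff.eq_partialSum {n : ℕ} {h : ℕ → ℕ → ℕ → ℤ} {nu : Fin n → ℤ}
    (hS : HasSDiff n h nu) (h0 : h n 0 0 = 0) (x m : ℕ) (hxm : x + m = n) :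
    h x 0 m = partialSum nu m := by
  induction m generalizing x with
  | zero =>
    obtain rfl : x = n := by omega
    simpa using h0
  | succ m ih =>
    have hprev := ih (x + 1) (by omega)
    have hd := hS ⟨m, by omega⟩
    dsimp only at hd
    rw [show n - (m + 1) = x by omega, show n - m = x + 1 by omega] at hd
    rw [partialSum_succ nu m (by omega)]
    omega

/-- Evaluating a row at its two ends identifies its number of ones. -/
lemma RowShape.eq_partialSum {n : ℕ} {h : ℕ → ℕ → ℕ → ℤ} {lam nu : Fin n → ℤ}
    (h0 : h n 0 0 = 0) (hNW : HasNWDiff n h lam) (hS : HasSDiff n h nu) {x m a : ℕ}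
    (hxm : x + m = n) (ha : RowShape h x m a) :
    (a : ℤ) = partialSum nu m - partialSum lam m := by
  have h1 := ha.2 0 m (by omega)
  have h2 := ha.1
  rw [hNW.eq_partialSum h0 x m hxm, hS.eq_partialSum h0 x m hxm] at h1
  omega

/-- The boundary data determine every value of a hive with Northeast side `ω_i`. -/
lemma HiveSet.eq_formula {n i : ℕ} (hi : i ≤ n) {lam nu : Fin n → ℤ} {h : ℕ → ℕ → ℕ → ℤ}
    (hh : h ∈ HiveSet n lam (omegaVec n i) nu) (x y z : ℕ) (hxyz : x + y + z = n) :
    h x y z = partialSum lam (y + z) +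
      min (z : ℤ) (partialSum nu (y + z) - partialSum lam (y + z)) := by
  obtain ⟨-, hive, h0, hNW, hNE, hS⟩ := hh
  obtain ⟨a, ha⟩ := hive.exists_rowShape hi hNE x (y + z) (by omega)
  rw [← ha.eq_partialSum h0 hNW hS (by omega), ← hNW.eq_partialSum h0 x (y + z) (by omega)]
  exact ha.2 y z rfl

lemma HiveSet.vertical_strip {n i : ℕ} (hi : i ≤ n) {lam nu : Fin n → ℤ} {h : ℕ → ℕ → ℕ → ℤ}
    (hh : h ∈ HiveSet n lam (omegaVec n i) nu) :
    (∀ j : Fin n, nu j - lam j = 0 ∨ nu j - lam j = 1) ∧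
      (∑ j : Fin n, (nu j - lam j)) = (i : ℤ) := by
  obtain ⟨-, hive, h0, hNW, hNE, hS⟩ := hh
  constructor
  · rintro ⟨j, hj⟩
    obtain ⟨a, ha⟩ := hive.exists_rowShape hi hNE (n - (j + 1)) (j + 1) (by omega)
    obtain ⟨a', ha', h1, h2⟩ := hive.rowShape_step (by omega) ha
    have e := ha.eq_partialSum h0 hNW hS (by omega)
    have e' := ha'.eq_partialSum h0 hNW hS (by omega)
    rw [partialSum_succ _ j hj, partialSum_succ _ j hj] at e
    omega
  · have e := (rowShape_zero hi hNE).eq_partialSum h0 hNW hS (by omega)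
    rw [Finset.sum_sub_distrib, ← partialSum_self, ← partialSum_self, e]

/-! ### Existence -/

/-- The candidate hive: its row with `y + z = m` starts at `λ_1 + ⋯ + λ_m` and has differences
`ω_a`, where `a = ∑_{k ≤ m} (ν_k - λ_k)`. It is `0` off the triangle. -/
def pieriHive (n : ℕ) (lam nu : Fin n → ℤ) (x y z : ℕ) : ℤ :=
  if x + y + z = n then
    partialSum lam (y + z) + min (z : ℤ) (partialSum nu (y + z) - partialSum lam (y + z))
  else 0

lemma pieriHive_apply {n : ℕ} (lam nu : Fin n → ℤ) {x y z m : ℕ} (hm : y + z = m)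
    (hxyz : x + m = n) :
    pieriHive n lam nu x y z =
      partialSum lam m + min (z : ℤ) (partialSum nu m - partialSum lam m) := by
  subst hm
  rw [pieriHive, if_pos (by omega)]

lemma partialSum_sub_bounds {n : ℕ} {lam nu : Fin n → ℤ}
    (hstrip : ∀ j : Fin n, nu j - lam j = 0 ∨ nu j - lam j = 1) (m : ℕ) (hm : m ≤ n) :
    0 ≤ partialSum nu m - partialSum lam m ∧ partialSum nu m - partialSum lam m ≤ m := by
  induction m with
  | zero => simp
  | succ m ih =>
    have hprev := ih (by omega)
    have hj := hstrip ⟨m, by omega⟩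
    rw [partialSum_succ _ m (by omega), partialSum_succ _ m (by omega)]
    push_cast
    omega

lemma pieriHive_isHive {n : ℕ} {lam nu : Fin n → ℤ} (hlam : Antitone lam) (hnu : Antitone nu)
    (hstrip : ∀ j : Fin n, nu j - lam j = 0 ∨ nu j - lam j = 1) :
    IsHive n (pieriHive n lam nu) := by
  intro x y z hxyz
  obtain ⟨m, hm⟩ : ∃ m, y + z = m := ⟨_, rfl⟩
  have hle : (⟨m, by omega⟩ : Fin n) ≤ ⟨m + 1, by omega⟩ := by simp
  have hl := hlam hle
  have hn := hnu hle
  have s0 := hstrip ⟨m, by omega⟩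
  have s1 := hstrip ⟨m + 1, by omega⟩
  have l0 := partialSum_succ lam m (by omega)
  have l1 := partialSum_succ lam (m + 1) (by omega)
  have n0 := partialSum_succ nu m (by omega)
  have n1 := partialSum_succ nu (m + 1) (by omega)
  rw [pieriHive_apply lam nu (x := x+1) (y := y) (z := z+1) (m := m+1) (by omega) (by omega),
    pieriHive_apply lam nu (x := x) (y := y+1) (z := z+1) (m := m+1+1) (by omega) (by omega),
    pieriHive_apply lam nu (x := x+1) (y := y+1) (z := z) (m := m+1) (by omega) (by omega),
    pieriHive_apply lam nu (x := x) (y := y) (z := z+2) (m := m+1+1) (by omega) (by omega),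
    pieriHive_apply lam nu (x := x+2) (y := y) (z := z) (m := m) (by omega) (by omega),
    pieriHive_apply lam nu (x := x) (y := y+2) (z := z) (m := m+1+1) (by omega) (by omega)]
  push_cast
  refine ⟨?_, ?_, ?_⟩ <;> omega

lemma pieriHive_mem {n i : ℕ} {lam nu : Fin n → ℤ} (hlam : Antitone lam) (hnu : Antitone nu)
    (hstrip : ∀ j : Fin n, nu j - lam j = 0 ∨ nu j - lam j = 1)
    (hsum : (∑ j : Fin n, (nu j - lam j)) = (i : ℤ)) :
    pieriHive n lam nu ∈ HiveSet n lam (omegaVec n i) nu := by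
  refine ⟨fun x y z hne => if_neg hne, pieriHive_isHive hlam hnu hstrip, ?_, ?_, ?_, ?_⟩
  · rw [pieriHive_apply lam nu (m := 0) (by omega) (by omega)]
    simp
  · rintro ⟨j, hj⟩
    have b0 := partialSum_sub_bounds hstrip j (by omega)
    have b1 := partialSum_sub_bounds hstrip (j + 1) (by omega)
    have l0 := partialSum_succ lam j hj
    dsimp only
    rw [pieriHive_apply lam nu (m := j + 1) (by omega) (by omega),
      pieriHive_apply lam nu (m := j) (by omega) (by omega)]
    push_cast
    omega
  · rintro ⟨j, hj⟩
    have hs : partialSum nu n - partialSum lam n = i := by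
      rw [partialSum_self, partialSum_self, ← Finset.sum_sub_distrib, hsum]
    dsimp only [omegaVec]
    rw [pieriHive_apply lam nu (m := n) (by omega) (by omega),
      pieriHive_apply lam nu (m := n) (by omega) (by omega), hs]
    push_cast
    split_ifs <;> omega
  · rintro ⟨j, hj⟩
    have b0 := partialSum_sub_bounds hstrip j (by omega)
    have b1 := partialSum_sub_bounds hstrip (j + 1) (by omega)
    have n0 := partialSum_succ nu j hj
    dsimp only
    rw [pieriHive_apply lam nu (m := j + 1) (by omega) (by omega),
      pieriHive_apply lam nu (m := j) (by omega) (by omega)]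
    push_cast at b1 ⊢
    omega

/-! ### The Pieri rule -/

/-- Pieri rule for hives: for weakly decreasing `λ, ν` the set
`HIVE_{λ, ω_i^n}^ν` has exactly one element if `ν - λ ∈ {0,1}ⁿ` with
`Σ (ν_k - λ_k) = i`, and is empty otherwise. -/
theorem pieri_rule (n : ℕ) (hn : 1 ≤ n) (i : ℕ) (hi : i ≤ n)
    (lam nu : Fin n → ℤ) (hlam : Antitone lam) (hnu : Antitone nu) :
    (((∀ j : Fin n, nu j - lam j = 0 ∨ nu j - lam j = 1) ∧
        (∑ j : Fin n, (nu j - lam j)) = (i : ℤ)) →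
      ∃ h, HiveSet n lam (omegaVec n i) nu = {h}) ∧
    (¬ ((∀ j : Fin n, nu j - lam j = 0 ∨ nu j - lam j = 1) ∧
        (∑ j : Fin n, (nu j - lam j)) = (i : ℤ)) →
      HiveSet n lam (omegaVec n i) nu = ∅) := by
  refine ⟨fun ⟨hstrip, hsum⟩ => ⟨pieriHive n lam nu, ?_⟩, fun hnot => ?_⟩
  · refine Set.eq_singleton_iff_unique_mem.2 ⟨pieriHive_mem hlam hnu hstrip hsum, ?_⟩
    intro h hh
    funext x y z
    by_cases hxyz : x + y + z = n
    · rw [HiveSet.eq_formula hi hh x y z hxyz, pieriHive, if_pos hxyz]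
    · rw [hh.1 x y z hxyz, pieriHive, if_neg hxyz]
  · exact Set.eq_empty_of_forall_notMem fun h hh => hnot (HiveSet.vertical_strip hi hh)
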